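/- arXiv:2401.09348 — 15 statements merged into one kernel-verified Lean document; each statement's English description precedes it below -/
import Mathlib

section
/- Let V and W be real inner product spaces, let G : V →ₗ[ℝ] W be a linear map, let Δt > 0, k > 0 be real constants and set c = k⁻¹. Suppose q : ℕ → V, v : ℕ → V and σ : ℕ → W satisfy, for every n ∈ ℕ: (i) the weak leapfrog stress update: for all ξ ∈ W, c⟪ξ, σ(n+1) − σ(n)⟫ = Δt⟪ξ, G(v n)⟫; (ii) the leapfrog (trapezoidal in staggered time) displacement reconstruction q(n+1) = q(n) + Δt • v(n); and (iii) the initial compatibility σ(0) = k • G(q 0). Then σ(n) = k • G(q n) for all n ∈ ℕ. -/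
open scoped RealInnerProductSpace

theorem stmt0 {V W : Type*} [NormedAddCommGroup V] [InnerProductSpace ℝ V]
    [NormedAddCommGroup W] [InnerProductSpace ℝ W]
    (G : V →ₗ[ℝ] W) (Δt k c : ℝ) (hΔt : 0 < Δt) (hk : 0 < k) (hc : c = k⁻¹)
    (q v : ℕ → V) (σ : ℕ → W)
    (hσupd : ∀ n : ℕ, ∀ ξ : W, c * ⟪ξ, σ (n + 1) - σ n⟫ = Δt * ⟪ξ, G (v n)⟫)
    (hq : ∀ n : ℕ, q (n + 1) = q n + Δt • v n)
    (hσ0 : σ 0 = k • G (q 0)) :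
    ∀ n : ℕ, σ n = k • G (q n) := by
  intro n
  induction n with
  | zero => exact hσ0
  | succ n ih =>
    have h : c • (σ (n + 1) - σ n) = Δt • G (v n) := by
      refine ext_inner_left ℝ fun ξ => ?_
      rw [real_inner_smul_right, real_inner_smul_right]
      exact hσupd n ξ
    have h2 : σ (n + 1) - σ n = k • Δt • G (v n) := by
      rw [← h, hc, smul_inv_smul₀ hk.ne']
    rw [hq, map_add, map_smul, smul_add, ← ih, ← h2]
    abel
end

section
/- Let V and W be real inner product spaces, G : V →ₗ[ℝ] W a linear map, ρ > 0, k > 0, Δt > 0 real constants and c = k⁻¹. Let q, v : ℕ → V and σ : ℕ → W satisfy the trapezoidal reconstruction q(n+1) = q(n) + Δt • v(n) for all n, the weak stress update (for all n and all ξ ∈ W) c⟪ξ, σ(n+1) − σ(n)⟫ = Δt⟪ξ, G(v n)⟫, and the initial compatibility σ(0) = k • G(q 0). Then the following are equivalent: (a) the mixed leapfrog dynamic equation holds, i.e. for all n ≥ 1 and all ψ ∈ V, ρ⟪ψ, v(n) − v(n−1)⟫ = −Δt⟪G ψ, σ(n)⟫; (b) the Lagrangian Störmer–Verlet dynamic equation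 holds, i.e. for all n ≥ 1 and all ψ ∈ V, ρ⟪ψ, v(n) − v(n−1)⟫ = −Δt·k⟪G ψ, G(q n)⟫. -/
open scoped RealInnerProductSpace

theorem stmt1 {V W : Type*} [NormedAddCommGroup V] [InnerProductSpace ℝ V]
    [NormedAddCommGroup W] [InnerProductSpace ℝ W]
    (G : V →ₗ[ℝ] W) (ρ k Δt c : ℝ) (hρ : 0 < ρ) (hk : 0 < k) (hΔt : 0 < Δt)
    (hc : c = k⁻¹)
    (q v : ℕ → V) (σ : ℕ → W)
    (hq : ∀ n : ℕ, q (n + 1) = q n + Δt • v n)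
    (hσupd : ∀ n : ℕ, ∀ ξ : W, c * ⟪ξ, σ (n + 1) - σ n⟫ = Δt * ⟪ξ, G (v n)⟫)
    (hσ0 : σ 0 = k • G (q 0)) :
    (∀ n : ℕ, 1 ≤ n → ∀ ψ : V,
        ρ * ⟪ψ, v n - v (n - 1)⟫ = -(Δt * ⟪G ψ, σ n⟫)) ↔
    (∀ n : ℕ, 1 ≤ n → ∀ ψ : V,
        ρ * ⟪ψ, v n - v (n - 1)⟫ = -(Δt * k * ⟪G ψ, G (q n)⟫)) := by
  have key : ∀ n : ℕ, ∀ ξ : W, ⟪ξ, σ n⟫ = k * ⟪ξ, G (q n)⟫ := by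
    intro n
    induction n with
    | zero =>
      intro ξ
      rw [hσ0, real_inner_smul_right]
    | succ n ih =>
      intro ξ
      have h := hσupd n ξ
      rw [inner_sub_right, ih ξ, hc] at h
      rw [hq n, map_add, map_smul, inner_add_right, real_inner_smul_right, mul_add, ← h,
        mul_inv_cancel_left₀ hk.ne']
      ring
  simp only [key, mul_assoc]
end

section
/- Let V and W be real inner product spaces, G : V →ₗ[ℝ] W a linear map, ρ > 0, k > 0, Δt > 0 real constants. Let q, v, a : ℕ → V satisfy, for all n ∈ ℕ: (i) the weak equation of motion ρ⟪ψ, a(n)⟫ = −k⟪G ψ, G(q n)⟫ for all ψ ∈ V; (ii) the Newmark velocity update with γ = 1/2: v(n+1) = v(n) + (Δt/2) • (a(n+1) + a(n)); (iii) the Newmark displacement update with β = 0: q(n+1) = q(n) + Δt • v(n) + (Δt²/2) • a(n). Then for all n ≥ 1 and all ψ ∈ V, ρ⟪ψ, q(n+1) − 2•q(n) + q(n−1)⟫ = −Δt²·k⟪G ψ, G(q n)⟫. -/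
open scoped RealInnerProductSpace

theorem stmt2 {V W : Type*} [NormedAddCommGroup V] [InnerProductSpace ℝ V]
    [NormedAddCommGroup W] [InnerProductSpace ℝ W]
    (G : V →ₗ[ℝ] W) (ρ k Δt : ℝ) (hρ : 0 < ρ) (hk : 0 < k) (hΔt : 0 < Δt)
    (q v a : ℕ → V)
    (heom : ∀ n : ℕ, ∀ ψ : V, ρ * ⟪ψ, a n⟫ = -(k * ⟪G ψ, G (q n)⟫))
    (hv : ∀ n : ℕ, v (n + 1) = v n + (Δt / 2) • (a (n + 1) + a n))
    (hq : ∀ n : ℕ, q (n + 1) = q n + Δt • v n + (Δt ^ 2 / 2) • a n) :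
    ∀ n : ℕ, 1 ≤ n → ∀ ψ : V,
      ρ * ⟪ψ, q (n + 1) - (2 : ℝ) • q n + q (n - 1)⟫ =
        -(Δt ^ 2 * k * ⟪G ψ, G (q n)⟫) := by
  intro n hn ψ
  obtain ⟨m, rfl⟩ : ∃ m, n = m + 1 := ⟨n - 1, by omega⟩
  have key : q (m + 1 + 1) - (2 : ℝ) • q (m + 1) + q (m + 1 - 1) = (Δt ^ 2) • a (m + 1) := by
    rw [Nat.add_sub_cancel, hq (m + 1), hv m, hq m]
    module
  rw [key, real_inner_smul_right]
  linear_combination Δt ^ 2 * heom (m + 1) ψ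
end

section
/- Let V and W be real inner product spaces, G : V →ₗ[ℝ] W a linear map, ρ > 0, k > 0, Δt > 0 real constants. Let q, v, a : ℕ → V satisfy, for all n ∈ ℕ: (i) the weak equation of motion ρ⟪ψ, a(n)⟫ = −k⟪G ψ, G(q n)⟫ for all ψ ∈ V; (ii) the Newmark velocity update with γ = 1/2: v(n+1) = v(n) + (Δt/2) • (a(n+1) + a(n)); (iii) the Newmark displacement update with β = 1/4: q(n+1) = q(n) + Δt • v(n) + Δt² • ((1/4) • a(n+1) + (1/4) • a(n)). Then for all n ∈ ℕ: q(n+1) − q(n) = (Δt/2) • (v(n) + v(n+1)), and for all ψ ∈ V, ρ⟪ψ, v(n+1) − v(n)⟫ = −Δt·k⟪G ψ, G((1/2) • (q(n) + q(n+1)))⟫. -/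
open scoped RealInnerProductSpace

theorem stmt3 {V W : Type*} [NormedAddCommGroup V] [InnerProductSpace ℝ V]
    [NormedAddCommGroup W] [InnerProductSpace ℝ W]
    (G : V →ₗ[ℝ] W) (ρ k Δt : ℝ) (hρ : 0 < ρ) (hk : 0 < k) (hΔt : 0 < Δt)
    (q v a : ℕ → V)
    (heom : ∀ n : ℕ, ∀ ψ : V, ρ * ⟪ψ, a n⟫ = -(k * ⟪G ψ, G (q n)⟫))
    (hv : ∀ n : ℕ, v (n + 1) = v n + (Δt / 2) • (a (n + 1) + a n))
    (hq : ∀ n : ℕ, q (n + 1) = q n + Δt • v n +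
      (Δt ^ 2) • ((1 / 4 : ℝ) • a (n + 1) + (1 / 4 : ℝ) • a n)) :
    ∀ n : ℕ,
      (q (n + 1) - q n = (Δt / 2) • (v n + v (n + 1))) ∧
      (∀ ψ : V, ρ * ⟪ψ, v (n + 1) - v n⟫ =
        -(Δt * k * ⟪G ψ, G ((1 / 2 : ℝ) • (q n + q (n + 1)))⟫)) := by
  intro n
  constructor
  · rw [hq n, hv n]
    module
  · intro ψ
    have h1 := heom n ψ
    have h2 := heom (n + 1) ψ
    have h3 : v (n + 1) - v n = (Δt / 2) • (a (n + 1) + a n) := by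
      rw [hv n]
      module
    rw [h3, map_smul, map_add, real_inner_smul_right, real_inner_smul_right,
      inner_add_right, inner_add_right]
    linear_combination (Δt / 2) * h1 + (Δt / 2) * h2
end

section
/- Let V and W be real inner product spaces, G : V →ₗ[ℝ] W a linear map, ρ > 0, k > 0, Δt > 0 real constants and c = k⁻¹. Let v : ℕ → V and σ : ℕ → W satisfy the mixed leapfrog scheme: for all n ≥ 1 and all ψ ∈ V, ρ⟪ψ, v(n) − v(n−1)⟫ = −Δt⟪G ψ, σ(n)⟫, and for all n ∈ ℕ and all ξ ∈ W, c⟪ξ, σ(n+1) − σ(n)⟫ = Δt⟪ξ, G(v n)⟫. Then for all n ≥ 1 and all ψ ∈ V, ρ⟪ψ, v(n+1) − 2•v(n) + v(n−1)⟫ = −Δt²·k⟪G ψ, G(v n)⟫. -/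
open scoped RealInnerProductSpace

theorem stmt4 {V W : Type*} [NormedAddCommGroup V] [InnerProductSpace ℝ V]
    [NormedAddCommGroup W] [InnerProductSpace ℝ W]
    (G : V →ₗ[ℝ] W) (ρ k Δt c : ℝ) (hρ : 0 < ρ) (hk : 0 < k) (hΔt : 0 < Δt)
    (hc : c = k⁻¹)
    (v : ℕ → V) (σ : ℕ → W)
    (hdyn : ∀ n : ℕ, 1 ≤ n → ∀ ψ : V,
      ρ * ⟪ψ, v n - v (n - 1)⟫ = -(Δt * ⟪G ψ, σ n⟫))
    (hσupd : ∀ n : ℕ, ∀ ξ : W, c * ⟪ξ, σ (n + 1) - σ n⟫ = Δt * ⟪ξ, G (v n)⟫) :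
    ∀ n : ℕ, 1 ≤ n → ∀ ψ : V,
      ρ * ⟪ψ, v (n + 1) - (2 : ℝ) • v n + v (n - 1)⟫ =
        -(Δt ^ 2 * k * ⟪G ψ, G (v n)⟫) := by
  intro n hn ψ
  have h1 := hdyn (n + 1) (by omega) ψ
  have h2 := hdyn n hn ψ
  have h3 := hσupd n (G ψ)
  rw [Nat.add_sub_cancel] at h1
  have hck : k * c = 1 := by rw [hc]; exact mul_inv_cancel₀ hk.ne'
  simp only [inner_sub_right, inner_add_right, real_inner_smul_right] at *
  linear_combination h1 - h2 - Δt * k * h3 + Δt * (⟪G ψ, σ (n + 1)⟫ - ⟪G ψ, σ n⟫) * hck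
end

section
/- Let W and V be real inner product spaces, D : W →ₗ[ℝ] V a linear map, ρ > 0, k > 0, Δt > 0 real constants, c = k⁻¹ and ν = ρ⁻¹. Let v : ℕ → V and σ : ℕ → W satisfy the dual mixed leapfrog scheme: for all n ≥ 1 and all ψ ∈ V, ρ⟪ψ, v(n) − v(n−1)⟫ = Δt⟪ψ, D(σ n)⟫, and for all n ∈ ℕ and all ξ ∈ W, c⟪ξ, σ(n+1) − σ(n)⟫ = −Δt⟪D ξ, v(n)⟫. Then for all n ≥ 1 and all ξ ∈ W, c⟪ξ, σ(n+1) − 2•σ(n) + σ(n−1)⟫ = −Δt²·ν⟪D ξ, D(σ n)⟫. -/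
open scoped RealInnerProductSpace

theorem stmt5 {W V : Type*} [NormedAddCommGroup W] [InnerProductSpace ℝ W]
    [NormedAddCommGroup V] [InnerProductSpace ℝ V]
    (D : W →ₗ[ℝ] V) (ρ k Δt c ν : ℝ) (hρ : 0 < ρ) (hk : 0 < k) (hΔt : 0 < Δt)
    (hc : c = k⁻¹) (hν : ν = ρ⁻¹)
    (v : ℕ → V) (σ : ℕ → W)
    (hdyn : ∀ n : ℕ, 1 ≤ n → ∀ ψ : V,
      ρ * ⟪ψ, v n - v (n - 1)⟫ = Δt * ⟪ψ, D (σ n)⟫)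
    (hσupd : ∀ n : ℕ, ∀ ξ : W, c * ⟪ξ, σ (n + 1) - σ n⟫ = -(Δt * ⟪D ξ, v n⟫)) :
    ∀ n : ℕ, 1 ≤ n → ∀ ξ : W,
      c * ⟪ξ, σ (n + 1) - (2 : ℝ) • σ n + σ (n - 1)⟫ =
        -(Δt ^ 2 * ν * ⟪D ξ, D (σ n)⟫) := by
  intro n hn ξ
  obtain ⟨m, rfl⟩ : ∃ m, n = m + 1 := ⟨n - 1, by omega⟩
  have h1 := hdyn (m + 1) hn (D ξ)
  have h2 := hσupd (m + 1) ξ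
  have h3 := hσupd m ξ
  simp only [Nat.add_sub_cancel, inner_sub_right, inner_add_right, real_inner_smul_right]
    at h1 h2 h3 ⊢
  have h4 : inner ℝ (D ξ) (v (m + 1)) - inner ℝ (D ξ) (v m)
      = ν * (Δt * inner ℝ (D ξ) (D (σ (m + 1)))) := by
    rw [← h1, hν, inv_mul_cancel_left₀ hρ.ne']
  linear_combination h2 - h3 - Δt * h4
end

section
/- Let W and V be real inner product spaces, D : W →ₗ[ℝ] V a linear map, k > 0, Δt > 0 real constants and c = k⁻¹. Let v, q : ℕ → V and σ : ℕ → W satisfy the reconstruction q(n+1) = q(n) + Δt • v(n) for all n ∈ ℕ, together with the initial constraint: for all ξ ∈ W, c⟪ξ, σ 0⟫ = −⟪D ξ, q 0⟫. Then the following are equivalent: (a) for all n ∈ ℕ and all ξ ∈ W, c⟪ξ, σ(n+1)⟫ = −⟪D ξ, q(n+1)⟫; (b) for all n ∈ ℕ and all ξ ∈ W, c⟪ξ, σ(n+1) − σ(n)⟫ = −Δt⟪D ξ, v(n)⟫. -/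
open scoped RealInnerProductSpace

theorem stmt6 {W V : Type*} [NormedAddCommGroup W] [InnerProductSpace ℝ W]
    [NormedAddCommGroup V] [InnerProductSpace ℝ V]
    (D : W →ₗ[ℝ] V) (k Δt c : ℝ) (hk : 0 < k) (hΔt : 0 < Δt) (hc : c = k⁻¹)
    (v q : ℕ → V) (σ : ℕ → W)
    (hq : ∀ n : ℕ, q (n + 1) = q n + Δt • v n)
    (hinit : ∀ ξ : W, c * ⟪ξ, σ 0⟫ = -⟪D ξ, q 0⟫) :
    (∀ n : ℕ, ∀ ξ : W, c * ⟪ξ, σ (n + 1)⟫ = -⟪D ξ, q (n + 1)⟫) ↔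
    (∀ n : ℕ, ∀ ξ : W, c * ⟪ξ, σ (n + 1) - σ n⟫ = -(Δt * ⟪D ξ, v n⟫)) := by
  have hqi : ∀ n : ℕ, ∀ ξ : W, ⟪D ξ, q (n + 1)⟫ = ⟪D ξ, q n⟫ + Δt * ⟪D ξ, v n⟫ := by
    intro n ξ
    rw [hq n, inner_add_right, real_inner_smul_right]
  constructor
  · intro h n ξ
    have hn : c * ⟪ξ, σ n⟫ = -⟪D ξ, q n⟫ := by
      cases n with
      | zero => exact hinit ξ
      | succ m => exact h m ξ
    have h1 := h n ξ
    rw [hqi n ξ] at h1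
    rw [inner_sub_right, mul_sub]
    linarith
  · intro h
    have key : ∀ n : ℕ, ∀ ξ : W, c * ⟪ξ, σ n⟫ = -⟪D ξ, q n⟫ := by
      intro n
      induction n with
      | zero => exact hinit
      | succ m ih =>
        intro ξ
        have h1 := h m ξ
        have h2 := ih ξ
        rw [inner_sub_right, mul_sub] at h1
        rw [hqi m ξ]
        linarith
    exact fun n => key (n + 1)
end

section
/- Let V and W be real inner product spaces, G : V →ₗ[ℝ] W a linear map, ρ > 0, k > 0, Δt > 0 real constants and c = k⁻¹. Let q, v : ℕ → V and σ : ℕ → W satisfy, for all n ∈ ℕ: the trapezoidal reconstruction q(n+1) = q(n) + (Δt/2) • (v(n) + v(n+1)); the weak implicit-midpoint stress update: for all ξ ∈ W, c⟪ξ, σ(n+1) − σ(n)⟫ = Δt⟪ξ, G((1/2) • (v(n) + v(n+1)))⟫; and the initial compatibility σ(0) = k • G(q 0). Then: (1) σ(n) = k • G(q n) for all n ∈ ℕ; and (2) the following are equivalent: (a) for all n ∈ ℕ and all ψ ∈ V, ρ⟪ψ, v(n+1) − v(n)⟫ = −Δt⟪G ψ, (1/2) • (σ(n) + σ(n+1))⟫;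 (b) for all n ∈ ℕ and all ψ ∈ V, ρ⟪ψ, v(n+1) − v(n)⟫ = −Δt·k⟪G ψ, G((1/2) • (q(n) + q(n+1)))⟫. -/
open scoped RealInnerProductSpace

theorem stmt7 {V W : Type*} [NormedAddCommGroup V] [InnerProductSpace ℝ V]
    [NormedAddCommGroup W] [InnerProductSpace ℝ W]
    (G : V →ₗ[ℝ] W) (ρ k Δt c : ℝ) (hρ : 0 < ρ) (hk : 0 < k) (hΔt : 0 < Δt)
    (hc : c = k⁻¹)
    (q v : ℕ → V) (σ : ℕ → W)
    (hq : ∀ n : ℕ, q (n + 1) = q n + (Δt / 2) • (v n + v (n + 1)))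
    (hσupd : ∀ n : ℕ, ∀ ξ : W,
      c * ⟪ξ, σ (n + 1) - σ n⟫ = Δt * ⟪ξ, G ((1 / 2 : ℝ) • (v n + v (n + 1)))⟫)
    (hσ0 : σ 0 = k • G (q 0)) :
    (∀ n : ℕ, σ n = k • G (q n)) ∧
    ((∀ n : ℕ, ∀ ψ : V, ρ * ⟪ψ, v (n + 1) - v n⟫ =
        -(Δt * ⟪G ψ, (1 / 2 : ℝ) • (σ n + σ (n + 1))⟫)) ↔
     (∀ n : ℕ, ∀ ψ : V, ρ * ⟪ψ, v (n + 1) - v n⟫ =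
        -(Δt * k * ⟪G ψ, G ((1 / 2 : ℝ) • (q n + q (n + 1)))⟫))) := by
  have key : ∀ n : ℕ, σ n = k • G (q n) := by
    intro n
    induction n with
    | zero => exact hσ0
    | succ n ih =>
      have h1 : c • (σ (n + 1) - σ n) = Δt • G ((1 / 2 : ℝ) • (v n + v (n + 1))) := by
        apply ext_inner_left ℝ
        intro ξ
        rw [real_inner_smul_right, real_inner_smul_right]
        exact hσupd n ξ
      have h2 : σ (n + 1) - σ n = k • Δt • G ((1 / 2 : ℝ) • (v n + v (n + 1))) := by
        rw [← h1, hc, smul_inv_smul₀ hk.ne']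
      rw [eq_add_of_sub_eq h2, ih, hq n]
      simp only [map_add, map_smul]
      module
  refine ⟨key, ?_⟩
  have e : ∀ (n : ℕ) (ψ : V), Δt * ⟪G ψ, (1 / 2 : ℝ) • (σ n + σ (n + 1))⟫ =
      Δt * k * ⟪G ψ, G ((1 / 2 : ℝ) • (q n + q (n + 1)))⟫ := by
    intro n ψ
    rw [key n, key (n + 1)]
    simp only [map_add, map_smul, real_inner_smul_right, inner_add_right]
    ring
  simp only [e]
end

section
/- Let V and W be real inner product spaces, G : V →ₗ[ℝ] W a linear map, ρ > 0, k > 0, Δt > 0 real constants and c = k⁻¹. Let v : ℕ → V and σ : ℕ → W satisfy the implicit midpoint mixed scheme: for all n ∈ ℕ and all ψ ∈ V, ρ⟪ψ, v(n+1) − v(n)⟫ = −Δt⟪G ψ, (1/2) • (σ(n) + σ(n+1))⟫, and for all n ∈ ℕ and all ξ ∈ W, c⟪ξ, σ(n+1) − σ(n)⟫ = Δt⟪ξ, G((1/2) • (v(n) + v(n+1)))⟫. Then for all n ≥ 1 and all ψ ∈ V, ρ⟪ψ, v(n+1) − 2•v(n) + v(n−1)⟫ = −Δt²·k⟪G ψ,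 G((1/4) • (v(n+1) + 2•v(n) + v(n−1)))⟫. -/
open scoped RealInnerProductSpace

theorem stmt8 {V W : Type*} [NormedAddCommGroup V] [InnerProductSpace ℝ V]
    [NormedAddCommGroup W] [InnerProductSpace ℝ W]
    (G : V →ₗ[ℝ] W) (ρ k Δt c : ℝ) (hρ : 0 < ρ) (hk : 0 < k) (hΔt : 0 < Δt)
    (hc : c = k⁻¹)
    (v : ℕ → V) (σ : ℕ → W)
    (hdyn : ∀ n : ℕ, ∀ ψ : V, ρ * ⟪ψ, v (n + 1) - v n⟫ =
      -(Δt * ⟪G ψ, (1 / 2 : ℝ) • (σ n + σ (n + 1))⟫))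
    (hσupd : ∀ n : ℕ, ∀ ξ : W,
      c * ⟪ξ, σ (n + 1) - σ n⟫ = Δt * ⟪ξ, G ((1 / 2 : ℝ) • (v n + v (n + 1)))⟫) :
    ∀ n : ℕ, 1 ≤ n → ∀ ψ : V,
      ρ * ⟪ψ, v (n + 1) - (2 : ℝ) • v n + v (n - 1)⟫ =
        -(Δt ^ 2 * k *
          ⟪G ψ, G ((1 / 4 : ℝ) • (v (n + 1) + (2 : ℝ) • v n + v (n - 1)))⟫) := by
  intro n hn ψ
  obtain ⟨m, rfl⟩ : ∃ m, n = m + 1 := ⟨n - 1, by omega⟩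
  have d0 := hdyn m ψ
  have d1 := hdyn (m + 1) ψ
  have s0 := hσupd m (G ψ)
  have s1 := hσupd (m + 1) (G ψ)
  have hck : k * c = 1 := by rw [hc]; exact mul_inv_cancel₀ hk.ne'
  simp only [Nat.add_sub_cancel, map_add, map_smul, inner_add_right, inner_sub_right,
    inner_smul_right] at *
  linear_combination d1 - d0 - Δt / 2 * k * (s0 + s1) +
    Δt / 2 * (⟪G ψ, σ (m + 1 + 1)⟫ - ⟪G ψ, σ m⟫) * hck
end

section
/- Let W and V be real inner product spaces, D : W →ₗ[ℝ] V a linear map, ρ > 0, k > 0, Δt > 0 real constants, c = k⁻¹ and ν = ρ⁻¹. Let v : ℕ → V and σ : ℕ → W satisfy the implicit midpoint dual mixed scheme: for all n ∈ ℕ and all ψ ∈ V, ρ⟪ψ, v(n+1) − v(n)⟫ = Δt⟪ψ, D((1/2) • (σ(n) + σ(n+1)))⟫, and for all n ∈ ℕ and all ξ ∈ W, c⟪ξ, σ(n+1) − σ(n)⟫ = −Δt⟪D ξ, (1/2) • (v(n) + v(n+1))⟫. Then for all n ≥ 1 and all ξ ∈ W, c⟪ξ, σ(n+1) − 2•σ(n)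 + σ(n−1)⟫ = −Δt²·ν⟪D ξ, D((1/4) • (σ(n+1) + 2•σ(n) + σ(n−1)))⟫. -/
open scoped RealInnerProductSpace

theorem stmt9 {W V : Type*} [NormedAddCommGroup W] [InnerProductSpace ℝ W]
    [NormedAddCommGroup V] [InnerProductSpace ℝ V]
    (D : W →ₗ[ℝ] V) (ρ k Δt c ν : ℝ) (hρ : 0 < ρ) (hk : 0 < k) (hΔt : 0 < Δt)
    (hc : c = k⁻¹) (hν : ν = ρ⁻¹)
    (v : ℕ → V) (σ : ℕ → W)
    (hdyn : ∀ n : ℕ, ∀ ψ : V, ρ * ⟪ψ, v (n + 1) - v n⟫ =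
      Δt * ⟪ψ, D ((1 / 2 : ℝ) • (σ n + σ (n + 1)))⟫)
    (hσupd : ∀ n : ℕ, ∀ ξ : W, c * ⟪ξ, σ (n + 1) - σ n⟫ =
      -(Δt * ⟪D ξ, (1 / 2 : ℝ) • (v n + v (n + 1))⟫)) :
    ∀ n : ℕ, 1 ≤ n → ∀ ξ : W,
      c * ⟪ξ, σ (n + 1) - (2 : ℝ) • σ n + σ (n - 1)⟫ =
        -(Δt ^ 2 * ν *
          ⟪D ξ, D ((1 / 4 : ℝ) • (σ (n + 1) + (2 : ℝ) • σ n + σ (n - 1)))⟫) := by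
  intro n hn ξ
  obtain ⟨m, rfl⟩ : ∃ m, n = m + 1 := ⟨n - 1, by omega⟩
  have h1 := hσupd (m + 1) ξ
  have h0 := hσupd m ξ
  have d1 := hdyn (m + 1) (D ξ)
  have d0 := hdyn m (D ξ)
  have e : ν * ρ = 1 := by rw [hν]; exact inv_mul_cancel₀ hρ.ne'
  simp only [Nat.add_sub_cancel, map_add, map_smul, inner_add_right, inner_sub_right,
    inner_smul_right] at *
  linear_combination h1 - h0 - Δt / 2 * ν * (d0 + d1)
    + Δt / 2 * (⟪D ξ, v (m + 1 + 1)⟫ - ⟪D ξ, v m⟫) * e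
end

section
/- Let W and V be real inner product spaces, D : W →ₗ[ℝ] V a linear map, k > 0, Δt > 0 real constants and c = k⁻¹. Let v, q : ℕ → V and σ : ℕ → W satisfy the trapezoidal reconstruction q(n+1) = q(n) + (Δt/2) • (v(n) + v(n+1)) for all n ∈ ℕ, together with the initial constraint: for all ξ ∈ W, c⟪ξ, σ 0⟫ = −⟪D ξ, q 0⟫. Then the following are equivalent: (a) for all n ∈ ℕ and all ξ ∈ W, c⟪ξ, (1/2) • (σ(n) + σ(n+1))⟫ = −⟪D ξ, (1/2) • (q(n) + q(n+1))⟫; (b) for all n ∈ ℕ and all ξ ∈ W, c⟪ξ, σ(n+1) − σ(n)⟫ = −Δt⟪D ξ, (1/2) • (v(n) + v(n+1))⟫. -/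
open scoped RealInnerProductSpace

theorem stmt10 {W V : Type*} [NormedAddCommGroup W] [InnerProductSpace ℝ W]
    [NormedAddCommGroup V] [InnerProductSpace ℝ V]
    (D : W →ₗ[ℝ] V) (k Δt c : ℝ) (hk : 0 < k) (hΔt : 0 < Δt) (hc : c = k⁻¹)
    (v q : ℕ → V) (σ : ℕ → W)
    (hq : ∀ n : ℕ, q (n + 1) = q n + (Δt / 2) • (v n + v (n + 1)))
    (hinit : ∀ ξ : W, c * ⟪ξ, σ 0⟫ = -⟪D ξ, q 0⟫) :
    (∀ n : ℕ, ∀ ξ : W, c * ⟪ξ, (1 / 2 : ℝ) • (σ n + σ (n + 1))⟫ =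
        -⟪D ξ, (1 / 2 : ℝ) • (q n + q (n + 1))⟫) ↔
    (∀ n : ℕ, ∀ ξ : W, c * ⟪ξ, σ (n + 1) - σ n⟫ =
        -(Δt * ⟪D ξ, (1 / 2 : ℝ) • (v n + v (n + 1))⟫)) := by
  have hq' : ∀ n : ℕ, ∀ ξ : W, ⟪D ξ, q (n + 1)⟫ =
      ⟪D ξ, q n⟫ + Δt / 2 * (⟪D ξ, v n⟫ + ⟪D ξ, v (n + 1)⟫) := by
    intro n ξ
    rw [hq n, inner_add_right, real_inner_smul_right, inner_add_right]
  simp only [inner_add_right, inner_sub_right, real_inner_smul_right]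
  constructor
  · intro h
    have key : ∀ n : ℕ, ∀ ξ : W, c * ⟪ξ, σ n⟫ = -⟪D ξ, q n⟫ := by
      intro n
      induction n with
      | zero => exact hinit
      | succ n ih =>
        intro ξ
        linarith [h n ξ, ih ξ]
    intro n ξ
    linarith [key n ξ, key (n + 1) ξ, hq' n ξ]
  · intro h
    have key : ∀ n : ℕ, ∀ ξ : W, c * ⟪ξ, σ n⟫ = -⟪D ξ, q n⟫ := by
      intro n
      induction n with
      | zero => exact hinit
      | succ n ih =>
        intro ξ
        linarith [h n ξ, ih ξ, hq' n ξ]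
    intro n ξ
    linarith [key n ξ, key (n + 1) ξ]
end

section
/- Let V and W be real inner product spaces, G : V →ₗ[ℝ] W a linear map, ρ > 0, k > 0 real constants and c = k⁻¹. Let v : ℝ → V be twice differentiable and σ : ℝ → W be differentiable, and suppose that for all t ∈ ℝ: (i) for all ψ ∈ V, ρ⟪ψ, v'(t)⟫ = −⟪G ψ, σ(t)⟫; and (ii) c • σ'(t) = G(v(t)). Then for all t ∈ ℝ and all ψ ∈ V, ρ⟪ψ, v''(t)⟫ = −k⟪G ψ, G(v(t))⟫. -/
open scoped RealInnerProductSpace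

theorem stmt11 {V W : Type*} [NormedAddCommGroup V] [InnerProductSpace ℝ V]
    [NormedAddCommGroup W] [InnerProductSpace ℝ W]
    (G : V →ₗ[ℝ] W) (ρ k c : ℝ) (hρ : 0 < ρ) (hk : 0 < k) (hc : c = k⁻¹)
    (v : ℝ → V) (σ : ℝ → W)
    (hv : Differentiable ℝ v) (hv' : Differentiable ℝ (deriv v))
    (hσ : Differentiable ℝ σ)
    (hdyn : ∀ t : ℝ, ∀ ψ : V, ρ * ⟪ψ, deriv v t⟫ = -⟪G ψ, σ t⟫)
    (hconst : ∀ t : ℝ, c • deriv σ t = G (v t)) :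
    ∀ t : ℝ, ∀ ψ : V, ρ * ⟪ψ, deriv (deriv v) t⟫ = -(k * ⟪G ψ, G (v t)⟫) := by
  intro t ψ
  have h1 : HasDerivAt (fun s => ρ * ⟪ψ, deriv v s⟫) (ρ * ⟪ψ, deriv (deriv v) t⟫) t := by
    have h := ((innerSL ℝ ψ).hasFDerivAt.comp_hasDerivAt t (hv' t).hasDerivAt).const_mul ρ
    exact h
  have h2 : HasDerivAt (fun s => -⟪G ψ, σ s⟫) (-⟪G ψ, deriv σ t⟫) t := by
    have h := ((innerSL ℝ (G ψ)).hasFDerivAt.comp_hasDerivAt t (hσ t).hasDerivAt).neg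
    exact h
  have hfun : (fun s => ρ * ⟪ψ, deriv v s⟫) = fun s => -⟪G ψ, σ s⟫ :=
    funext fun s => hdyn s ψ
  rw [hfun] at h1
  rw [h1.unique h2, ← hconst t, inner_smul_right, hc, mul_inv_cancel_left₀ hk.ne']
end

section
/- Let W and V be real inner product spaces, D : W →ₗ[ℝ] V a linear map, ρ > 0, k > 0 real constants, c = k⁻¹ and ν = ρ⁻¹. Let σ : ℝ → W be twice differentiable and v : ℝ → V be differentiable, and suppose that for all t ∈ ℝ: (i) ρ • v'(t) = D(σ(t)); and (ii) for all ξ ∈ W, c⟪ξ, σ'(t)⟫ = −⟪D ξ, v(t)⟫. Then for all t ∈ ℝ and all ξ ∈ W, c⟪ξ, σ''(t)⟫ = −ν⟪D ξ, D(σ(t))⟫. -/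
open scoped RealInnerProductSpace

theorem stmt12 {W V : Type*} [NormedAddCommGroup W] [InnerProductSpace ℝ W]
    [NormedAddCommGroup V] [InnerProductSpace ℝ V]
    (D : W →ₗ[ℝ] V) (ρ k c ν : ℝ) (hρ : 0 < ρ) (hk : 0 < k)
    (hc : c = k⁻¹) (hν : ν = ρ⁻¹)
    (σ : ℝ → W) (v : ℝ → V)
    (hσ : Differentiable ℝ σ) (hσ' : Differentiable ℝ (deriv σ))
    (hv : Differentiable ℝ v)
    (hbal : ∀ t : ℝ, ρ • deriv v t = D (σ t))
    (hconst : ∀ t : ℝ, ∀ ξ : W, c * ⟪ξ, deriv σ t⟫ = -⟪D ξ, v t⟫) :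
    ∀ t : ℝ, ∀ ξ : W, c * ⟪ξ, deriv (deriv σ) t⟫ = -(ν * ⟪D ξ, D (σ t)⟫) := by
  intro t ξ
  have h1 : HasDerivAt (fun s => c * ⟪ξ, deriv σ s⟫) (c * ⟪ξ, deriv (deriv σ) t⟫) t :=
    (((innerSL ℝ ξ).hasFDerivAt.comp_hasDerivAt t (hσ' t).hasDerivAt)).const_mul c
  have h2 : HasDerivAt (fun s => -⟪D ξ, v s⟫) (-⟪D ξ, deriv v t⟫) t :=
    ((innerSL ℝ (D ξ)).hasFDerivAt.comp_hasDerivAt t (hv t).hasDerivAt).neg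
  have h3 : (fun s => c * ⟪ξ, deriv σ s⟫) = (fun s => -⟪D ξ, v s⟫) :=
    funext fun s => hconst s ξ
  rw [h3] at h1
  rw [h1.unique h2, ← hbal t, inner_smul_right, hν, inv_mul_cancel_left₀ hρ.ne']
end

section
/- Let V and W be real inner product spaces, C : V →ₗ[ℝ] W a linear map, ε > 0 and μ > 0 real constants. Let E : ℝ → V be twice differentiable and H : ℝ → W be differentiable, and suppose that for all t ∈ ℝ: (i) for all ψ ∈ V, ε⟪ψ, E'(t)⟫ = ⟪C ψ, H(t)⟫; and (ii) μ • H'(t) = −C(E(t)). Then for all t ∈ ℝ and all ψ ∈ V, ε⟪ψ, E''(t)⟫ = −μ⁻¹⟪C ψ, C(E(t))⟫. -/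
open scoped RealInnerProductSpace

theorem stmt15 {V W : Type*} [NormedAddCommGroup V] [InnerProductSpace ℝ V]
    [NormedAddCommGroup W] [InnerProductSpace ℝ W]
    (C : V →ₗ[ℝ] W) (ε μ : ℝ) (hε : 0 < ε) (hμ : 0 < μ)
    (E : ℝ → V) (H : ℝ → W)
    (hE : Differentiable ℝ E) (hE' : Differentiable ℝ (deriv E))
    (hH : Differentiable ℝ H)
    (hdyn : ∀ t : ℝ, ∀ ψ : V, ε * ⟪ψ, deriv E t⟫ = ⟪C ψ, H t⟫)
    (hfaraday : ∀ t : ℝ, μ • deriv H t = -C (E t)) :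
    ∀ t : ℝ, ∀ ψ : V,
      ε * ⟪ψ, deriv (deriv E) t⟫ = -(μ⁻¹ * ⟪C ψ, C (E t)⟫) := by
  intro t ψ
  have h1 : HasDerivAt (fun s => ε * ⟪ψ, deriv E s⟫) (ε * ⟪ψ, deriv (deriv E) t⟫) t :=
    (((innerSL ℝ ψ).hasFDerivAt).comp_hasDerivAt t (hE' t).hasDerivAt).const_mul ε
  have h2 : HasDerivAt (fun s => ⟪C ψ, H s⟫) ⟪C ψ, deriv H t⟫ t :=
    ((innerSL ℝ (C ψ)).hasFDerivAt).comp_hasDerivAt t (hH t).hasDerivAt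
  have h3 : (fun s => ε * ⟪ψ, deriv E s⟫) = fun s => ⟪C ψ, H s⟫ :=
    funext fun s => hdyn s ψ
  rw [h3] at h1
  rw [h1.unique h2]
  have h4 : C (E t) = -(μ • deriv H t) := by rw [hfaraday t, neg_neg]
  rw [h4, inner_neg_right, real_inner_smul_right]
  field_simp
end

section
/- Let W and V be real inner product spaces, C : W →ₗ[ℝ] V a linear map, ε > 0 and μ > 0 real constants. Let H : ℝ → W be twice differentiable and E : ℝ → V be differentiable, and suppose that for all t ∈ ℝ: (i) ε • E'(t) = C(H(t)); and (ii) for all ξ ∈ W, μ⟪ξ, H'(t)⟫ = −⟪C ξ, E(t)⟫. Then for all t ∈ ℝ and all ξ ∈ W, μ⟪ξ, H''(t)⟫ = −ε⁻¹⟪C ξ, C(H(t))⟫. -/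
open scoped RealInnerProductSpace

theorem stmt16 {W V : Type*} [NormedAddCommGroup W] [InnerProductSpace ℝ W]
    [NormedAddCommGroup V] [InnerProductSpace ℝ V]
    (C : W →ₗ[ℝ] V) (ε μ : ℝ) (hε : 0 < ε) (hμ : 0 < μ)
    (H : ℝ → W) (E : ℝ → V)
    (hH : Differentiable ℝ H) (hH' : Differentiable ℝ (deriv H))
    (hE : Differentiable ℝ E)
    (hampere : ∀ t : ℝ, ε • deriv E t = C (H t))
    (hdyn : ∀ t : ℝ, ∀ ξ : W, μ * ⟪ξ, deriv H t⟫ = -⟪C ξ, E t⟫) :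
    ∀ t : ℝ, ∀ ξ : W,
      μ * ⟪ξ, deriv (deriv H) t⟫ = -(ε⁻¹ * ⟪C ξ, C (H t)⟫) := by
  intro t ξ
  have h1 : HasDerivAt (fun s => μ * ⟪ξ, deriv H s⟫) (μ * ⟪ξ, deriv (deriv H) t⟫) t :=
    ((innerSL ℝ ξ).hasFDerivAt.comp_hasDerivAt t (hH' t).hasDerivAt).const_mul μ
  have h2 : HasDerivAt (fun s => -⟪C ξ, E s⟫) (-⟪C ξ, deriv E t⟫) t :=
    ((innerSL ℝ (C ξ)).hasFDerivAt.comp_hasDerivAt t (hE t).hasDerivAt).neg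
  have h3 : (fun s => μ * ⟪ξ, deriv H s⟫) = fun s => -⟪C ξ, E s⟫ :=
    funext fun s => hdyn s ξ
  rw [h3] at h1
  rw [h1.unique h2, ← hampere t, real_inner_smul_right, inv_mul_cancel_left₀ hε.ne']
end
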